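/- Increment bound for Ψ_k^K (Lemma 6). Let α, b > 0, β ∈ (0,1), and α_j := α(j+b)^{−β}. Let c ∈ (0,1] and let A be an invertible n×n real matrix such that ‖I − α_j A‖∞ ≤ 1 − cα_j for all j ≥ 0, ‖A^{-1}‖∞ ≤ 1/c, and ‖A‖∞ ≤ 2. Then there exists a constant C > 0 depending only on α, b, and β such that for all integers k and K with c^{−1/(β(1−β))} ≤ k and k + 1 ≤ K: ‖Ψ_{k+1}^K − Ψ_k^K‖∞ ≤ C/k^β. -/

import Mathlib

open Finset

/-- ℓ∞→ℓ∞ operator norm of a matrix: maximum absolute row sum. -/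
noncomputable def normInf {n : Type*} [Fintype n] [Nonempty n] (M : Matrix n n ℝ) : ℝ :=
  Finset.univ.sup' Finset.univ_nonempty (fun i => ∑ j, |M i j|)

/-- The matrix product ∏_{j=a}^{b-1} (I - α_j A), taken over the index range [a, b)
(empty products equal the identity; all factors commute, so the order is immaterial). -/
noncomputable def prodIco {n : Type*} [Fintype n] [DecidableEq n]
    (A : Matrix n n ℝ) (α : ℕ → ℝ) (a b : ℕ) : Matrix n n ℝ :=
  ((List.range' a (b - a)).map (fun j => (1 : Matrix n n ℝ) - α j • A)).prod

/-- Ψ_i^K := α_i ∑_{k=i+1}^{K} ∏_{j=i+1}^{k-1} (I - α_j A). -/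
noncomputable def Psi {n : Type*} [Fintype n] [DecidableEq n]
    (A : Matrix n n ℝ) (α : ℕ → ℝ) (i K : ℕ) : Matrix n n ℝ :=
  α i • ∑ k ∈ Finset.Icc (i + 1) K, prodIco A α (i + 1) k

/-!
Put `w j = (α j)⁻¹`. The partial products `R m` of the factors `1 - α j • A` satisfy
`α m • A * R m = R m - R (m + 1)`, so summation by parts expresses `A * ∑ R l` through
`w 0 • R 0`, `w m • R m` and `∑ (w (l + 1) - w l) • R (l + 1)`. The quantity
`w m * ‖R m‖ + ∑ (w (l + 1) - w l) * ‖R (l + 1)‖` does not increase while the increments of `w` are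
at most `c / 2`. For `w j = (j + b) ^ β / α` this holds once `j` exceeds a multiple of
`c ^ (-1 / (1 - β)) ≤ k`; before that, `w j` is `O(k ^ β)`. Hence `A * Ψ (k + 1)` is bounded, and
`Ψ (k + 1) - Ψ k = -α k • ((w (k + 1) - w k) • Ψ (k + 1) + (1 - A * Ψ (k + 1)))`
is `O(α k)`, because `c * ‖Ψ‖ ≤ ‖A * Ψ‖` and `w (k + 1) - w k = O(c)`.
-/

section SummationByParts

variable {𝕜 E : Type*} [Field 𝕜] [Ring E] [Algebra 𝕜 E]

lemma mul_sum_range_eq_of_succ_eq_one_sub_smul_mul {A : E} {a : ℕ → 𝕜} {R : ℕ → E}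
    (ha : ∀ m, a m ≠ 0) (hR : ∀ m, R (m + 1) = (1 - a m • A) * R m) (m : ℕ) :
    A * ∑ l ∈ range m, R l = (a 0)⁻¹ • R 0 - (a m)⁻¹ • R m
      + ∑ l ∈ range m, ((a (l + 1))⁻¹ - (a l)⁻¹) • R (l + 1) := by
  induction m with
  | zero => simp
  | succ m ih =>
    have hstep : (a m)⁻¹ • R (m + 1) = (a m)⁻¹ • R m - A * R m := by
      rw [hR, sub_mul, one_mul, smul_sub, smul_mul_assoc, inv_smul_smul₀ (ha m)]
    rw [sum_range_succ, sum_range_succ, mul_add, ih, sub_smul, hstep]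
    abel

end SummationByParts

section Contraction

lemma inv_mul_add_sum_le_two_mul {a r : ℕ → ℝ} {c B : ℝ} (ha : ∀ m, 0 < a m) (hanti : Antitone a)
    (hc : 0 ≤ c) (hr : ∀ m, 0 ≤ r m) (hr_zero : r 0 ≤ 1)
    (hr_succ : ∀ m, r (m + 1) ≤ (1 - c * a m) * r m) (hB_zero : (a 0)⁻¹ ≤ B)
    (hB : ∀ m, 2 * ((a (m + 1))⁻¹ - (a m)⁻¹) ≤ c ∨ (a (m + 1))⁻¹ ≤ B) (m : ℕ) :
    (a m)⁻¹ * r m + ∑ l ∈ range m, ((a (l + 1))⁻¹ - (a l)⁻¹) * r (l + 1) ≤ 2 * B := by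
  have hw (m : ℕ) : 0 < (a m)⁻¹ := inv_pos.2 (ha m)
  have hdiff (m : ℕ) : 0 ≤ (a (m + 1))⁻¹ - (a m)⁻¹ :=
    sub_nonneg.2 (inv_anti₀ (ha _) (hanti m.le_succ))
  have hr_anti : Antitone r := antitone_nat_of_succ_le fun m ↦
    (hr_succ m).trans (mul_le_of_le_one_left (hr m) (by linarith [mul_nonneg hc (ha m).le]))
  have hr_le_one (m : ℕ) : r m ≤ 1 := (hr_anti m.zero_le).trans hr_zero
  induction m with
  | zero => simpa using (mul_le_of_le_one_right (hw 0).le hr_zero).trans (by linarith [hw 0])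
  | succ m ih =>
    rcases hB m with hsmall | hle
    · have hdecay : (a m)⁻¹ * r (m + 1) ≤ (a m)⁻¹ * r m - c * r m :=
        calc (a m)⁻¹ * r (m + 1) ≤ (a m)⁻¹ * ((1 - c * a m) * r m) :=
              mul_le_mul_of_nonneg_left (hr_succ m) (hw m).le
          _ = (a m)⁻¹ * r m - c * r m := by have := (ha m).ne'; field_simp
      have hgrowth : 2 * ((a (m + 1))⁻¹ - (a m)⁻¹) * r (m + 1) ≤ c * r m :=
        mul_le_mul hsmall (hr_anti m.le_succ) (hr _) hc
      rw [sum_range_succ]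
      linarith
    · have htelescope : ∑ l ∈ range (m + 1), ((a (l + 1))⁻¹ - (a l)⁻¹) * r (l + 1)
          ≤ (a (m + 1))⁻¹ - (a 0)⁻¹ := by
        rw [← sum_range_sub fun l ↦ (a l)⁻¹]
        exact sum_le_sum fun l _ ↦ mul_le_of_le_one_right (hdiff l) (hr_le_one _)
      linarith [mul_le_of_le_one_right (hw (m + 1)).le (hr_le_one (m + 1)), hw 0]

variable {E : Type*} [NormedRing E] [NormedAlgebra ℝ E]

lemma mul_norm_le_norm_mul_of_norm_one_sub_smul_le {A : E} {a c : ℝ} (ha : 0 < a)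
    (hA : ‖1 - a • A‖ ≤ 1 - c * a) (x : E) : c * ‖x‖ ≤ ‖A * x‖ := by
  have htriangle : ‖x‖ ≤ (1 - c * a) * ‖x‖ + a * ‖A * x‖ :=
    calc ‖x‖ = ‖(1 - a • A) * x + a • (A * x)‖ := by simp [sub_mul]
      _ ≤ ‖1 - a • A‖ * ‖x‖ + a * ‖A * x‖ :=
        norm_add_le_of_le (norm_mul_le _ _) (by rw [norm_smul, Real.norm_of_nonneg ha.le])
      _ ≤ (1 - c * a) * ‖x‖ + a * ‖A * x‖ := by gcongr
  refine le_of_mul_le_mul_left ?_ ha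
  linarith

lemma norm_mul_sum_range_le {A : E} {a : ℕ → ℝ} {R : ℕ → E} {c B : ℝ} (ha : ∀ m, 0 < a m)
    (hanti : Antitone a) (hc : 0 ≤ c) (hA : ∀ m, ‖1 - a m • A‖ ≤ 1 - c * a m)
    (hR_zero : ‖R 0‖ ≤ 1) (hR : ∀ m, R (m + 1) = (1 - a m • A) * R m) (hB_zero : (a 0)⁻¹ ≤ B)
    (hB : ∀ m, 2 * ((a (m + 1))⁻¹ - (a m)⁻¹) ≤ c ∨ (a (m + 1))⁻¹ ≤ B) (m : ℕ) :
    ‖A * ∑ l ∈ range m, R l‖ ≤ 3 * B := by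
  have hw (m : ℕ) : 0 ≤ (a m)⁻¹ := (inv_pos.2 (ha m)).le
  have hdiff (m : ℕ) : 0 ≤ (a (m + 1))⁻¹ - (a m)⁻¹ :=
    sub_nonneg.2 (inv_anti₀ (ha _) (hanti m.le_succ))
  have hR_succ (m : ℕ) : ‖R (m + 1)‖ ≤ (1 - c * a m) * ‖R m‖ := by
    rw [hR]
    exact (norm_mul_le _ _).trans (mul_le_mul_of_nonneg_right (hA m) (norm_nonneg _))
  have hpotential := inv_mul_add_sum_le_two_mul ha hanti hc (fun m ↦ norm_nonneg (R m)) hR_zero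
    hR_succ hB_zero hB m
  calc ‖A * ∑ l ∈ range m, R l‖
      = ‖(a 0)⁻¹ • R 0 - (a m)⁻¹ • R m
          + ∑ l ∈ range m, ((a (l + 1))⁻¹ - (a l)⁻¹) • R (l + 1)‖ := by
        rw [mul_sum_range_eq_of_succ_eq_one_sub_smul_mul (fun m ↦ (ha m).ne') hR]
    _ ≤ (a 0)⁻¹ * ‖R 0‖ + (a m)⁻¹ * ‖R m‖
          + ∑ l ∈ range m, ((a (l + 1))⁻¹ - (a l)⁻¹) * ‖R (l + 1)‖ := by
        refine norm_add_le_of_le (norm_sub_le_of_le ?_ ?_) (norm_sum_le_of_le _ fun l _ ↦ ?_)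
        · rw [norm_smul, Real.norm_of_nonneg (hw 0)]
        · rw [norm_smul, Real.norm_of_nonneg (hw m)]
        · rw [norm_smul, Real.norm_of_nonneg (hdiff l)]
    _ ≤ 3 * B := by linarith [mul_le_of_le_one_right (hw 0) hR_zero]

end Contraction

section Psi

variable {n : Type*} [Fintype n] [DecidableEq n] (A : Matrix n n ℝ) (α : ℕ → ℝ)

lemma prodIco_self (a : ℕ) : prodIco A α a a = 1 := by
  simp [prodIco]

lemma commute_prodIco (a b : ℕ) : Commute A (prodIco A α a b) := by
  refine Commute.list_prod_right _ _ fun M hM ↦ ?_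
  obtain ⟨j, -, rfl⟩ := List.mem_map.1 hM
  exact (Commute.one_right A).sub_right ((Commute.refl A).smul_right (α j))

lemma prodIco_add_succ_left (a m : ℕ) :
    prodIco A α a (a + (m + 1)) = (1 - α a • A) * prodIco A α (a + 1) (a + 1 + m) := by
  simp [prodIco, List.range'_succ]

lemma prodIco_add_succ_right (a m : ℕ) :
    prodIco A α a (a + (m + 1)) = (1 - α (a + m) • A) * prodIco A α a (a + m) := by
  have hcomm : Commute (1 - α (a + m) • A) (prodIco A α a (a + m)) :=
    (Commute.one_left _).sub_left ((commute_prodIco A α a (a + m)).smul_left _)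
  rw [hcomm.eq]
  simp [prodIco, List.range'_1_concat]

lemma Psi_self_add (i m : ℕ) :
    Psi A α i (i + m) = α i • ∑ l ∈ range m, prodIco A α (i + 1) (i + 1 + l) := by
  rw [Psi, ← Ico_add_one_right_eq_Icc, sum_Ico_eq_sum_range, Nat.add_right_comm i m 1,
    Nat.add_sub_cancel_left]

variable {α}

lemma Psi_succ_sub_Psi (hα : ∀ j, α j ≠ 0) {k K : ℕ} (hK : k + 1 ≤ K) :
    Psi A α (k + 1) K - Psi A α k K =
      -(α k • (((α (k + 1))⁻¹ - (α k)⁻¹) • Psi A α (k + 1) K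
        + (1 - A * Psi A α (k + 1) K))) := by
  obtain ⟨m, rfl⟩ := Nat.exists_eq_add_of_le hK
  have hPsi : Psi A α k (k + 1 + m) = α k • (1 + (1 - α (k + 1) • A) *
      ∑ l ∈ range m, prodIco A α (k + 1 + 1) (k + 1 + 1 + l)) := by
    rw [add_assoc k 1 m, add_comm 1 m, Psi_self_add, sum_range_succ', add_zero, prodIco_self,
      mul_sum, add_comm]
    simp only [prodIco_add_succ_left]
  rw [hPsi, Psi_self_add]
  generalize ∑ l ∈ range m, prodIco A α (k + 1 + 1) (k + 1 + 1 + l) = S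
  have hinv : ((α (k + 1))⁻¹ - (α k)⁻¹) • α (k + 1) • S = S - (α k)⁻¹ • α (k + 1) • S := by
    rw [sub_smul, inv_smul_smul₀ (hα (k + 1))]
  rw [hinv, sub_mul, one_mul, smul_mul_assoc, mul_smul_comm]
  simp only [smul_add, smul_sub, smul_inv_smul₀ (hα k)]
  abel

end Psi

section OperatorNorm

open scoped Matrix.Norms.Operator

lemma normInf_eq_norm {n : Type*} [Fintype n] [Nonempty n] (M : Matrix n n ℝ) :
    normInf M = ‖M‖ := by
  rw [Matrix.linfty_opNorm_def, ← sup'_eq_sup univ_nonempty,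
    apply_sup'_eq_sup'_comp univ_nonempty NNReal.toReal fun _ _ ↦ NNReal.coe_max _ _]
  simp [normInf, Function.comp_def]

variable {n : Type*} [Fintype n] [Nonempty n] [DecidableEq n] {A : Matrix n n ℝ} {c : ℝ}
  {α : ℕ → ℝ}

lemma norm_mul_Psi_le {B : ℝ} (hα : ∀ j, 0 < α j) (hanti : Antitone α) (hc : 0 ≤ c)
    (hA : ∀ j, ‖1 - α j • A‖ ≤ 1 - c * α j) {i K : ℕ} (hK : i ≤ K) (hB_zero : (α (i + 1))⁻¹ ≤ B)
    (hB : ∀ j, 2 * ((α (j + 1))⁻¹ - (α j)⁻¹) ≤ c ∨ (α (j + 1))⁻¹ ≤ B) :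
    ‖A * Psi A α i K‖ ≤ α i * (3 * B) := by
  obtain ⟨m, rfl⟩ := Nat.exists_eq_add_of_le hK
  rw [Psi_self_add, mul_smul_comm, norm_smul, Real.norm_of_nonneg (hα i).le]
  refine mul_le_mul_of_nonneg_left ?_ (hα i).le
  exact norm_mul_sum_range_le (a := fun l ↦ α (i + 1 + l)) (fun l ↦ hα _)
    (fun _ _ hle ↦ hanti (Nat.add_le_add_left hle _)) hc (fun l ↦ hA _)
    (by simp [prodIco_self]) (fun l ↦ prodIco_add_succ_right A α (i + 1) l) hB_zero
    (fun l ↦ hB (i + 1 + l)) m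

lemma norm_Psi_succ_sub_Psi_le {k K : ℕ} {G d : ℝ} (hα : ∀ j, 0 < α j) (hanti : Antitone α)
    (hA : ‖1 - α k • A‖ ≤ 1 - c * α k) (hK : k + 1 ≤ K) (hd : 0 ≤ d)
    (hdiff : (α (k + 1))⁻¹ - (α k)⁻¹ ≤ d * c) (hG : ‖A * Psi A α (k + 1) K‖ ≤ G) :
    ‖Psi A α (k + 1) K - Psi A α k K‖ ≤ α k * (d * G + (1 + G)) := by
  have hdiff_nonneg : 0 ≤ (α (k + 1))⁻¹ - (α k)⁻¹ :=
    sub_nonneg.2 (inv_anti₀ (hα _) (hanti k.le_succ))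
  have hPsi : c * ‖Psi A α (k + 1) K‖ ≤ G :=
    (mul_norm_le_norm_mul_of_norm_one_sub_smul_le (hα k) hA _).trans hG
  rw [Psi_succ_sub_Psi A (fun j ↦ (hα j).ne') hK, norm_neg, norm_smul,
    Real.norm_of_nonneg (hα k).le]
  refine mul_le_mul_of_nonneg_left (norm_add_le_of_le ?_ ?_) (hα k).le
  · calc ‖((α (k + 1))⁻¹ - (α k)⁻¹) • Psi A α (k + 1) K‖
        = ((α (k + 1))⁻¹ - (α k)⁻¹) * ‖Psi A α (k + 1) K‖ := by
          rw [norm_smul, Real.norm_of_nonneg hdiff_nonneg]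
      _ ≤ d * c * ‖Psi A α (k + 1) K‖ := by gcongr
      _ = d * (c * ‖Psi A α (k + 1) K‖) := mul_assoc _ _ _
      _ ≤ d * G := by gcongr
  · exact norm_sub_le_of_le norm_one.le hG

end OperatorNorm

lemma rpow_add_one_sub_rpow_le {x β : ℝ} (hx : 0 < x) (hβ0 : 0 ≤ β) (hβ1 : β ≤ 1) :
    (x + 1) ^ β - x ^ β ≤ β * x ^ (β - 1) := by
  have hfactor : (x + 1) ^ β = x ^ β * (1 + x⁻¹) ^ β := by
    rw [← Real.mul_rpow hx.le (by positivity), mul_add, mul_one, mul_inv_cancel₀ hx.ne']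
  have hbernoulli : (1 + x⁻¹) ^ β ≤ 1 + β * x⁻¹ :=
    rpow_one_add_le_one_add_mul_self (by linarith [inv_pos.2 hx]) hβ0 hβ1
  calc (x + 1) ^ β - x ^ β ≤ x ^ β * (1 + β * x⁻¹) - x ^ β := by rw [hfactor]; gcongr
    _ = β * x ^ (β - 1) := by rw [Real.rpow_sub_one hx.ne']; ring

lemma rpow_neg_one_div_le_rpow_neg_one_div_mul {c β : ℝ} (hc0 : 0 < c) (hc1 : c ≤ 1) (hβ0 : 0 < β)
    (hβ1 : β < 1) : c ^ (-1 / (1 - β)) ≤ c ^ (-1 / (β * (1 - β))) := by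
  refine Real.rpow_le_rpow_of_exponent_ge hc0 hc1 ?_
  have hβ : 0 < 1 - β := sub_pos.2 hβ1
  rw [neg_div, neg_div, neg_le_neg_iff]
  exact one_div_le_one_div_of_le (by positivity) (mul_le_of_le_one_left hβ.le hβ1.le)

/-- The polynomial step-size sequence with scale `α`, shift `b` and exponent `β`. -/
noncomputable def polyStep (α b β : ℝ) (j : ℕ) : ℝ := α * ((j : ℝ) + b) ^ (-β)

section PolyStep

variable {α b β : ℝ}

lemma polyStep_pos (hα : 0 < α) (hb : 0 < b) (j : ℕ) : 0 < polyStep α b β j := by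
  unfold polyStep
  positivity

lemma polyStep_antitone (hα : 0 ≤ α) (hb : 0 < b) (hβ : 0 ≤ β) : Antitone (polyStep α b β) := by
  intro i j hij
  refine mul_le_mul_of_nonneg_left ?_ hα
  exact Real.rpow_le_rpow_of_nonpos (by positivity) (by gcongr) (neg_nonpos.2 hβ)

lemma inv_polyStep (hb : 0 ≤ b) (j : ℕ) : (polyStep α b β j)⁻¹ = (j + b) ^ β / α := by
  rw [polyStep, Real.rpow_neg (by positivity), mul_inv, inv_inv, div_eq_inv_mul]

lemma polyStep_le_div_rpow (hα : 0 ≤ α) (hb : 0 ≤ b) (hβ : 0 ≤ β) {k j : ℕ} (hk : 0 < k)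
    (hkj : k ≤ j) : polyStep α b β j ≤ α / (k : ℝ) ^ β := by
  have hle : (k : ℝ) ≤ j + b := le_add_of_le_of_nonneg (Nat.cast_le.2 hkj) hb
  rw [polyStep, Real.rpow_neg (by positivity), ← div_eq_mul_inv]
  gcongr

lemma inv_polyStep_le {L x : ℝ} (hα : 0 ≤ α) (hb : 0 ≤ b) (hβ : 0 ≤ β) (hL : 0 ≤ L) (hx : 0 ≤ x)
    {j : ℕ} (hj : j + b ≤ L * x) : (polyStep α b β j)⁻¹ ≤ L ^ β * x ^ β / α := by
  rw [inv_polyStep hb, ← Real.mul_rpow hL hx]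
  gcongr

lemma inv_polyStep_succ_sub_le (hα : 0 ≤ α) (hb : 0 < b) (hβ0 : 0 ≤ β) (hβ1 : β ≤ 1) (j : ℕ) :
    (polyStep α b β (j + 1))⁻¹ - (polyStep α b β j)⁻¹ ≤ β / α * ((j : ℝ) + b) ^ (β - 1) := by
  have hj : (0 : ℝ) < j + b := by positivity
  rw [inv_polyStep hb.le, inv_polyStep hb.le, ← sub_div, Nat.cast_succ, add_right_comm,
    div_mul_eq_mul_div]
  exact div_le_div_of_nonneg_right (rpow_add_one_sub_rpow_le hj hβ0 hβ1) hα

lemma inv_polyStep_succ_sub_le_mul {c x : ℝ} (hα : 0 ≤ α) (hb : 0 < b) (hβ0 : 0 ≤ β)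
    (hβ1 : β < 1) (hc : 0 < c) (hx : c ^ (-1 / (1 - β)) ≤ x) {t : ℝ} (ht : 0 < t) {j : ℕ}
    (hj : t * x ≤ j + b) :
    (polyStep α b β (j + 1))⁻¹ - (polyStep α b β j)⁻¹ ≤ β / α * t ^ (β - 1) * c := by
  have hβ : β - 1 < 0 := sub_neg.2 hβ1
  have hx_pos : 0 < x := (Real.rpow_pos_of_pos hc _).trans_le hx
  have hxc : x ^ (β - 1) ≤ c :=
    calc x ^ (β - 1) ≤ (c ^ (-1 / (1 - β))) ^ (β - 1) :=
          Real.rpow_le_rpow_of_nonpos (by positivity) hx hβ.le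
      _ = c := by
          rw [← Real.rpow_mul hc.le, ← neg_sub β 1, neg_div_neg_eq, one_div_mul_cancel hβ.ne,
            Real.rpow_one]
  calc (polyStep α b β (j + 1))⁻¹ - (polyStep α b β j)⁻¹ ≤ β / α * ((j : ℝ) + b) ^ (β - 1) :=
        inv_polyStep_succ_sub_le hα hb hβ0 hβ1.le j
    _ ≤ β / α * (t * x) ^ (β - 1) := by
        gcongr ?_ * ?_
        exact Real.rpow_le_rpow_of_nonpos (by positivity) hj hβ.le
    _ = β / α * t ^ (β - 1) * x ^ (β - 1) := by rw [Real.mul_rpow ht.le hx_pos.le, mul_assoc]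
    _ ≤ β / α * t ^ (β - 1) * c := by gcongr

open scoped Matrix.Norms.Operator in
lemma norm_mul_Psi_polyStep_succ_le {n : Type*} [Fintype n] [Nonempty n] [DecidableEq n]
    {A : Matrix n n ℝ} {c : ℝ} (hα : 0 < α) (hb : 0 < b) (hβ0 : 0 ≤ β) (hβ1 : β < 1) (hc : 0 < c)
    (hA : ∀ j, ‖1 - polyStep α b β j • A‖ ≤ 1 - c * polyStep α b β j) {k K : ℕ}
    (hk : c ^ (-1 / (1 - β)) ≤ k) (hK : k + 1 ≤ K) :
    ‖A * Psi A (polyStep α b β) (k + 1) K‖ ≤ 3 * ((2 / α) ^ (1 / (1 - β)) + 3 + b) ^ β := by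
  set t : ℝ := (2 / α) ^ (1 / (1 - β)) with ht_def
  set L : ℝ := t + 3 + b
  have ht : 0 < t := by positivity
  have hk_pos : 0 < (k : ℝ) := (Real.rpow_pos_of_pos hc _).trans_le hk
  have hk_one : (1 : ℝ) ≤ k := mod_cast Nat.cast_pos.1 hk_pos
  have hinv {j : ℕ} (hj : j + b ≤ L * k) : (polyStep α b β j)⁻¹ ≤ L ^ β * (k : ℝ) ^ β / α :=
    inv_polyStep_le hα.le hb.le hβ0 (by positivity) hk_pos.le hj
  have htβ : β / α * t ^ (β - 1) = β / 2 := by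
    rw [ht_def, ← Real.rpow_mul (by positivity), ← neg_sub 1 β, mul_neg,
      one_div_mul_cancel (sub_pos.2 hβ1).ne', Real.rpow_neg_one]
    field_simp
  have hdichotomy (j : ℕ) : 2 * ((polyStep α b β (j + 1))⁻¹ - (polyStep α b β j)⁻¹) ≤ c ∨
      (polyStep α b β (j + 1))⁻¹ ≤ L ^ β * (k : ℝ) ^ β / α := by
    rcases le_total (t * k) (j + b) with hj | hj
    · left
      have hslope := inv_polyStep_succ_sub_le_mul hα.le hb hβ0 hβ1 hc hk ht hj
      rw [htβ] at hslope
      nlinarith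
    · right
      exact hinv (by push_cast; nlinarith)
  calc ‖A * Psi A (polyStep α b β) (k + 1) K‖
      ≤ polyStep α b β (k + 1) * (3 * (L ^ β * (k : ℝ) ^ β / α)) :=
        norm_mul_Psi_le (polyStep_pos hα hb) (polyStep_antitone hα.le hb hβ0) hc.le hA hK
          (hinv (by push_cast; nlinarith)) hdichotomy
    _ ≤ α / (k : ℝ) ^ β * (3 * (L ^ β * (k : ℝ) ^ β / α)) := by
        gcongr
        exact polyStep_le_div_rpow hα.le hb.le hβ0 (Nat.cast_pos.1 hk_pos) k.le_succ
    _ = 3 * L ^ β := by field_simp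

end PolyStep

open scoped Matrix.Norms.Operator in
theorem increment_bound_Psi_general {α b β : ℝ} (hα : 0 < α) (hb : 0 < b) (hβ0 : 0 ≤ β)
    (hβ1 : β < 1) :
    ∃ C : ℝ, 0 < C ∧
      ∀ (n : Type*) [Fintype n] [Nonempty n] [DecidableEq n] (A : Matrix n n ℝ) (c : ℝ), 0 < c →
        (∀ j, normInf (1 - polyStep α b β j • A) ≤ 1 - c * polyStep α b β j) →
        ∀ k K : ℕ, c ^ (-1 / (1 - β)) ≤ (k : ℝ) → k + 1 ≤ K →
          normInf (Psi A (polyStep α b β) (k + 1) K - Psi A (polyStep α b β) k K)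
            ≤ C / (k : ℝ) ^ β := by
  set G : ℝ := 3 * ((2 / α) ^ (1 / (1 - β)) + 3 + b) ^ β
  have : 0 < G := by positivity
  refine ⟨α * (β / α * G + (1 + G)), by positivity, fun n _ _ _ A c hc hA k K hk hK ↦ ?_⟩
  simp only [normInf_eq_norm] at hA ⊢
  have hk_pos : 0 < k := Nat.cast_pos.1 ((Real.rpow_pos_of_pos hc _).trans_le hk)
  have hdiff : (polyStep α b β (k + 1))⁻¹ - (polyStep α b β k)⁻¹ ≤ β / α * c := by
    simpa using inv_polyStep_succ_sub_le_mul hα.le hb hβ0 hβ1 hc hk one_pos (by linarith)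
  calc ‖Psi A (polyStep α b β) (k + 1) K - Psi A (polyStep α b β) k K‖
      ≤ polyStep α b β k * (β / α * G + (1 + G)) :=
        norm_Psi_succ_sub_Psi_le (polyStep_pos hα hb) (polyStep_antitone hα.le hb hβ0) (hA k) hK
          (by positivity) hdiff (norm_mul_Psi_polyStep_succ_le hα hb hβ0 hβ1 hc hA hk hK)
    _ ≤ α / (k : ℝ) ^ β * (β / α * G + (1 + G)) := by
        gcongr
        exact polyStep_le_div_rpow hα.le hb.le hβ0 hk_pos le_rfl
    _ = α * (β / α * G + (1 + G)) / (k : ℝ) ^ β := div_mul_eq_mul_div _ _ _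

/-- Increment bound for Ψ_k^K (Lemma 6). -/
theorem increment_bound_Psi
    (α b β : ℝ) (hα : 0 < α) (hb : 0 < b) (hβ0 : 0 < β) (hβ1 : β < 1) :
    ∃ C : ℝ, 0 < C ∧
      ∀ (n : Type) [Fintype n] [Nonempty n] [DecidableEq n],
        ∀ (A : Matrix n n ℝ) (c : ℝ), IsUnit A → 0 < c → c ≤ 1 →
          (∀ j : ℕ, normInf ((1 : Matrix n n ℝ)
              - (α * ((j : ℝ) + b) ^ (-β)) • A) ≤ 1 - c * (α * ((j : ℝ) + b) ^ (-β))) →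
          normInf A⁻¹ ≤ 1 / c →
          normInf A ≤ 2 →
          ∀ k K : ℕ, c ^ (-1 / (β * (1 - β))) ≤ (k : ℝ) → k + 1 ≤ K →
            normInf (Psi A (fun j => α * ((j : ℝ) + b) ^ (-β)) (k + 1) K
                - Psi A (fun j => α * ((j : ℝ) + b) ^ (-β)) k K) ≤
              C / (k : ℝ) ^ β := by
  obtain ⟨C, hC, hbound⟩ := increment_bound_Psi_general hα hb hβ0.le hβ1
  exact ⟨C, hC, fun n _ _ _ A c _ hc0 hc1 hA _ _ k K hk ↦ hbound n A c hc0 hA k K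
    ((rpow_neg_one_div_le_rpow_neg_one_div_mul hc0 hc1 hβ0 hβ1).trans hk)⟩
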